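/- Consider the two-armed structured bandit with Θ = [−1, 1], μ_1(θ) = −θ·1{θ > 0}, μ_2(θ) = −1{θ ≤ 0}, where rewards are normally distributed with unit variance. There exists an algorithm such that max{E_0 R_n(0), sup_{θ > 0} θ·E_θ R_n(θ)} ∈ O(log log n); in particular this maximum is not Ω(log n). -/

import Mathlib

open MeasureTheory ProbabilityTheory

namespace TwoArmedBandit

/-- A (deterministic, history-dependent) algorithm for a two-armed bandit: `choose t h` is the
arm played at round `t + 1` given the vector `h` of rewards observed in the first `t` rounds. -/
structure Alg where
  choose : (t : ℕ) → (Fin t → ℝ) → Fin 2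
  measurable_choose : ∀ t, Measurable (choose t)

/-- The canonical trajectory space: `ω t` is the reward received at round `t + 1`. -/
abbrev Traj : Type := ℕ → ℝ

/-- The arm played at round `t ∈ {1, 2, …}` on trajectory `ω`. -/
def armAt (alg : Alg) (t : ℕ) (ω : Traj) : Fin 2 :=
  alg.choose (t - 1) fun i => ω i.val

/-- `IsEnv μ alg P` asserts that for every `θ`, `P θ` is the law of the reward sequence
obtained when the algorithm `alg` interacts with the two-armed bandit environment in which arm
`i` yields independent `N(μ i θ, 1)`-distributed rewards: each `P θ` is a probability measure
and, conditionally on the first `t` rewards, the reward at round `t + 1` is Gaussian with unit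
variance and mean `μ i θ` where `i` is the arm chosen by the algorithm at round `t + 1`. -/
def IsEnv {Θ : Type*} (μ : Fin 2 → Θ → ℝ) (alg : Alg) (P : Θ → Measure Traj) : Prop :=
  (∀ θ, IsProbabilityMeasure (P θ)) ∧
  ∀ θ (t : ℕ) (f : (Fin (t + 1) → ℝ) → ℝ), Measurable f → (∃ C, ∀ x, |f x| ≤ C) →
    ∫ ω, f (fun i => ω i.val) ∂(P θ) =
      ∫ ω, ∫ x, f (Fin.snoc (fun i : Fin t => ω i.val) x)
        ∂(gaussianReal (μ (alg.choose t fun i => ω i.val) θ) 1) ∂(P θ)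

/-- The cumulative regret over the first `n` rounds on trajectory `ω`, under parameter `θ`. -/
noncomputable def regret {Θ : Type*} (μ : Fin 2 → Θ → ℝ) (alg : Alg) (θ : Θ) (n : ℕ)
    (ω : Traj) : ℝ :=
  ∑ t ∈ Finset.Icc 1 n, (max (μ 0 θ) (μ 1 θ) - μ (armAt alg t ω) θ)

/-- The expected cumulative regret `E_θ R_n(θ)`. -/
noncomputable def expRegret {Θ : Type*} (μ : Fin 2 → Θ → ℝ) (alg : Alg)
    (P : Θ → Measure Traj) (θ : Θ) (n : ℕ) : ℝ :=
  ∫ ω, regret μ alg θ n ω ∂(P θ)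

/-- The mean functions of the bandit of Figure 4(a): `Θ = [−1,1]`,
`μ₁(θ) = −θ·1{θ > 0}` and `μ₂(θ) = −1{θ ≤ 0}`. -/
noncomputable def muAmb : Fin 2 → ℝ → ℝ := fun i θ =>
  if i = 0 then (if 0 < θ then -θ else 0) else (if θ ≤ 0 then -1 else 0)


/-! ### The algorithm -/

abbrev St : Type := (Fin 2 → ℕ) × (Fin 2 → ℝ)

noncomputable def thr (k : ℕ) : ℝ := Real.sqrt (8 * 2 ^ k * Real.log (k + 1))

/-- Condition for playing the second arm. -/
def Cond (s : St) : Prop :=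
  ∃ k : ℕ, s.1 0 = 2 ^ k ∧ s.2 0 ≤ -thr k ∧ -((s.1 1 : ℝ) / 2) - 4 * (k + 1) ≤ s.2 1

open Classical in
noncomputable def armOf (s : St) : Fin 2 := if Cond s then 1 else 0

lemma measurableSet_Cond : MeasurableSet {s : St | Cond s} := by
  unfold Cond
  rw [Set.ofPred_exists]
  refine MeasurableSet.iUnion fun k => ?_
  have h1 : Measurable fun s : St => s.1 0 := (measurable_pi_apply 0).comp measurable_fst
  have h2 : Measurable fun s : St => s.2 0 := (measurable_pi_apply 0).comp measurable_snd
  have h3 : Measurable fun s : St => s.1 1 := (measurable_pi_apply 1).comp measurable_fst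
  have h4 : Measurable fun s : St => s.2 1 := (measurable_pi_apply 1).comp measurable_snd
  have h3' : Measurable fun s : St => (s.1 1 : ℝ) := measurable_from_nat.comp h3
  refine MeasurableSet.inter (h1 (measurableSet_singleton _)) (MeasurableSet.inter ?_ ?_)
  · exact measurableSet_le h2 measurable_const
  · exact measurableSet_le (((h3'.div_const 2).neg).sub_const _) h4

lemma measurable_armOf : Measurable armOf := by
  classical
  unfold armOf
  exact Measurable.ite measurableSet_Cond measurable_const measurable_const

noncomputable def st : ℕ → Traj → St
  | 0, _ => (fun _ => 0, fun _ => 0)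
  | t + 1, ω =>
    (fun i => (st t ω).1 i + if armOf (st t ω) = i then 1 else 0,
     fun i => (st t ω).2 i + if armOf (st t ω) = i then ω t else 0)

lemma measurable_st (t : ℕ) : Measurable (st t) := by
  induction t with
  | zero => exact measurable_const
  | succ t ih =>
    have ha : Measurable fun ω => armOf (st t ω) := measurable_armOf.comp ih
    have e : st (t + 1) = fun ω =>
        (fun i => (st t ω).1 i + if armOf (st t ω) = i then 1 else 0,
         fun i => (st t ω).2 i + if armOf (st t ω) = i then ω t else 0) := rfl
    rw [e]
    refine Measurable.prodMk (measurable_pi_lambda _ fun i => ?_)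
      (measurable_pi_lambda _ fun i => ?_)
    · exact ((measurable_pi_apply i).comp (measurable_fst.comp ih)).add
        (Measurable.ite (ha (measurableSet_singleton i)) measurable_const measurable_const)
    · exact ((measurable_pi_apply i).comp (measurable_snd.comp ih)).add
        (Measurable.ite (ha (measurableSet_singleton i)) (measurable_pi_apply t) measurable_const)

lemma st_congr (t : ℕ) (ω ω' : Traj) (h : ∀ i < t, ω i = ω' i) : st t ω = st t ω' := by
  induction t with
  | zero => rfl
  | succ t ih =>
    have := ih fun i hi => h i (by omega)
    simp only [st, this, h t (by omega)]

/-- Extend a finite history by zeros. -/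
noncomputable def ext (t : ℕ) (h : Fin t → ℝ) : Traj := fun i => if hi : i < t then h ⟨i, hi⟩ else 0

lemma measurable_ext (t : ℕ) : Measurable (ext t) := by
  refine measurable_pi_lambda _ fun i => ?_
  unfold ext
  by_cases hi : i < t
  · simp only [hi, dite_true]; exact measurable_pi_apply _
  · simp only [hi, dite_false]; exact measurable_const

noncomputable def theAlg : Alg where
  choose t h := armOf (st t (ext t h))
  measurable_choose t := measurable_armOf.comp ((measurable_st t).comp (measurable_ext t))

lemma choose_eq (t : ℕ) (ω : Traj) :
    theAlg.choose t (fun i => ω i.val) = armOf (st t ω) := by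
  show armOf (st t (ext t _)) = _
  congr 1
  apply st_congr
  intro i hi
  simp [ext, hi]

/-! ### The exponential martingale -/

noncomputable def qf (μ l : ℝ) (i : Fin 2) (m : ℕ) (s : St) (x : ℝ) : ℝ :=
  if armOf s = i ∧ s.1 i < m then Real.exp (l * (x - μ) - l ^ 2 / 2) else 1

noncomputable def W (μ l : ℝ) (i : Fin 2) (m : ℕ) : ℕ → Traj → ℝ
  | 0, _ => 1
  | t + 1, ω => W μ l i m t ω * qf μ l i m (st t ω) (ω t)

lemma qf_pos (μ l : ℝ) (i : Fin 2) (m : ℕ) (s : St) (x : ℝ) : 0 < qf μ l i m s x := by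
  unfold qf; split_ifs <;> positivity

lemma W_pos (μ l : ℝ) (i : Fin 2) (m t : ℕ) (ω : Traj) : 0 < W μ l i m t ω := by
  induction t with
  | zero => exact one_pos
  | succ t ih => exact mul_pos ih (qf_pos _ _ _ _ _ _)

lemma W_congr (μ l : ℝ) (i : Fin 2) (m t : ℕ) (ω ω' : Traj) (h : ∀ i < t, ω i = ω' i) :
    W μ l i m t ω = W μ l i m t ω' := by
  induction t with
  | zero => rfl
  | succ t ih =>
    simp only [W, ih fun i hi => h i (by omega), h t (by omega),
      st_congr t ω ω' fun i hi => h i (by omega)]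

lemma measurable_W (μ l : ℝ) (i : Fin 2) (m t : ℕ) : Measurable (W μ l i m t) := by
  induction t with
  | zero => exact measurable_const
  | succ t ih =>
    have e : W μ l i m (t + 1) = fun ω => W μ l i m t ω * qf μ l i m (st t ω) (ω t) := rfl
    rw [e]
    refine ih.mul ?_
    unfold qf
    have ha : Measurable fun ω => armOf (st t ω) := measurable_armOf.comp (measurable_st t)
    have hb : Measurable fun ω => (st t ω).1 i :=
      (measurable_pi_apply i).comp (measurable_fst.comp (measurable_st t))
    refine Measurable.ite ?_ ?_ measurable_const
    · exact (ha (measurableSet_singleton i)).inter (measurableSet_lt hb measurable_const)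
    · have : Measurable fun ω : Traj => ω t := measurable_pi_apply t
      fun_prop

lemma W_eq (μ l : ℝ) (i : Fin 2) (m t : ℕ) (ω : Traj) (h : (st t ω).1 i ≤ m) :
    W μ l i m t ω =
      Real.exp (l * ((st t ω).2 i - μ * (st t ω).1 i) - l ^ 2 * (st t ω).1 i / 2) := by
  induction t with
  | zero => simp [W, st]
  | succ t ih =>
    by_cases ha : armOf (st t ω) = i
    · simp only [st, ha, if_true] at h ⊢
      have h' : (st t ω).1 i < m := by omega
      simp only [W, qf, ha, h', and_self, if_true]
      rw [ih h'.le, ← Real.exp_add]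
      congr 1; push_cast; ring
    · simp only [st, ha, if_false, add_zero] at h ⊢
      simp only [W, qf, ha, false_and, if_false, mul_one]
      exact ih h

lemma cnt_mono (i : Fin 2) (ω : Traj) : Monotone fun t => (st t ω).1 i :=
  monotone_nat_of_le_succ fun t => by simp [st]

lemma cnt_le (i : Fin 2) (n : ℕ) (ω : Traj) : (st n ω).1 i ≤ n := by
  induction n with
  | zero => simp [st]
  | succ n ih => simp only [st]; split_ifs <;> omega

lemma W_final (μ l : ℝ) (i : Fin 2) (m t n : ℕ) (ω : Traj) (htn : t ≤ n)
    (h : (st t ω).1 i = m) :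
    W μ l i m n ω = Real.exp (l * ((st t ω).2 i - μ * m) - l ^ 2 * m / 2) := by
  induction n, htn using Nat.le_induction with
  | base => rw [W_eq _ _ _ _ _ _ h.le, h]
  | succ n hn ih =>
    have : ¬ (st n ω).1 i < m := by
      have := cnt_mono i ω hn
      simp only at this; omega
    simp only [W, qf, this, and_false, if_false, mul_one, ih]

lemma exists_cnt (i : Fin 2) (m n : ℕ) (ω : Traj) (h : m < (st n ω).1 i) :
    ∃ t < n, (st t ω).1 i = m ∧ armOf (st t ω) = i := by
  induction n with
  | zero => simp [st] at h
  | succ n ih =>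
    by_cases h1 : m < (st n ω).1 i
    · obtain ⟨t, ht, h2⟩ := ih h1
      exact ⟨t, by omega, h2⟩
    · simp only [st] at h
      by_cases ha : armOf (st n ω) = i
      · simp only [ha, if_true] at h
        exact ⟨n, by omega, by omega, ha⟩
      · simp only [ha, if_false] at h; omega

lemma qf_int (θ l : ℝ) (i : Fin 2) (m : ℕ) (s : St) :
    Integrable (qf (muAmb i θ) l i m s) (gaussianReal (muAmb (armOf s) θ) 1) ∧
    ∫ x, qf (muAmb i θ) l i m s x ∂(gaussianReal (muAmb (armOf s) θ) 1) = 1 := by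
  unfold qf
  by_cases h : armOf s = i ∧ s.1 i < m
  · simp only [h, and_self, if_true]
    set μ := muAmb i θ
    have e : (fun x : ℝ => Real.exp (l * (x - μ) - l ^ 2 / 2)) =
        fun x => Real.exp (l * x) * Real.exp (- l * μ - l ^ 2 / 2) := by
      funext x; rw [← Real.exp_add]; congr 1; ring
    rw [e]
    refine ⟨(integrable_exp_mul_gaussianReal l).mul_const _, ?_⟩
    rw [integral_mul_const]
    have := congrFun (mgf_id_gaussianReal (μ := μ) (v := 1)) l
    simp only [mgf, id] at this
    rw [this, ← Real.exp_add, ← Real.exp_zero]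
    congr 1; simp; ring
  · simp only [h, if_false]
    exact ⟨integrable_const _, by simp⟩

lemma W_integral (P : ℝ → Measure Traj) (hP : IsEnv muAmb theAlg P) (θ l : ℝ) (i : Fin 2)
    (m t : ℕ) : Integrable (W (muAmb i θ) l i m t) (P θ) ∧
      ∫ ω, W (muAmb i θ) l i m t ω ∂(P θ) ≤ 1 := by
  have := hP.1 θ
  induction t with
  | zero => simp [W, integrable_const]
  | succ t ih =>
    obtain ⟨hi, hle⟩ := ih
    set μ := muAmb i θ with hμ
    have hm := measurable_W μ l i m (t + 1)
    have key : ∀ C : ℕ, ∫ ω, min (W μ l i m (t + 1) ω) C ∂(P θ) ≤ 1 := by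
      intro C
      have h0 := hP.2 θ t (fun h => min (W μ l i m (t + 1) (ext (t + 1) h)) C)
        ((hm.comp (measurable_ext _)).min measurable_const)
        ⟨C, fun x => by
          rw [abs_of_nonneg (le_min (W_pos _ _ _ _ _ _).le (Nat.cast_nonneg C))]
          exact min_le_right _ _⟩
      have e1 : ∀ ω : Traj, W μ l i m (t + 1) (ext (t + 1) fun i => ω i.val)
          = W μ l i m (t + 1) ω := fun ω => by
        apply W_congr; intro j hj; simp [ext, hj]
      have e2 : ∀ (ω : Traj) (x : ℝ),
          W μ l i m (t + 1) (ext (t + 1) (Fin.snoc (fun i : Fin t => ω i.val) x))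
          = W μ l i m t ω * qf μ l i m (st t ω) x := fun ω x => by
        have hc : ∀ j < t, ext (t + 1) (Fin.snoc (fun i : Fin t => ω i.val) x) j = ω j := by
          intro j hj
          have : j < t + 1 := by omega
          simp [ext, this, Fin.snoc, hj]
        have hl : ext (t + 1) (Fin.snoc (fun i : Fin t => ω i.val) x) t = x := by
          simp [ext, Fin.snoc]
        simp only [W]
        rw [hl, W_congr μ l i m t _ ω hc, st_congr t _ ω hc]
      simp only [e1, e2, choose_eq] at h0
      rw [h0]
      refine le_trans ?_ hle
      refine integral_mono_of_nonneg (Filter.Eventually.of_forall fun ω => ?_) hi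
        (Filter.Eventually.of_forall fun ω => ?_)
      · exact integral_nonneg fun x =>
          le_min (mul_pos (W_pos _ _ _ _ _ _) (qf_pos _ _ _ _ _ _)).le (Nat.cast_nonneg C)
      · obtain ⟨q1, q2⟩ := qf_int θ l i m (st t ω)
        calc _ ≤ ∫ x, W μ l i m t ω * qf μ l i m (st t ω) x
                  ∂(gaussianReal (muAmb (armOf (st t ω)) θ) 1) := by
              refine integral_mono_of_nonneg (Filter.Eventually.of_forall fun x => ?_)
                (q1.const_mul _) (Filter.Eventually.of_forall fun x => min_le_left _ _)
              exact le_min (mul_pos (W_pos _ _ _ _ _ _) (qf_pos _ _ _ _ _ _)).le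
                (Nat.cast_nonneg C)
          _ = W μ l i m t ω := by rw [integral_const_mul, q2, mul_one]
    have hpos : ∀ ω, 0 ≤ W μ l i m (t + 1) ω := fun ω => (W_pos _ _ _ _ _ _).le
    have hlint : ∫⁻ ω, ENNReal.ofReal (W μ l i m (t + 1) ω) ∂(P θ) ≤ 1 := by
      have hsup : ∀ ω, ENNReal.ofReal (W μ l i m (t + 1) ω)
          = ⨆ C : ℕ, ENNReal.ofReal (min (W μ l i m (t + 1) ω) C) := by
        intro ω
        apply le_antisymm
        · obtain ⟨C, hC⟩ := exists_nat_ge (W μ l i m (t + 1) ω)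
          refine le_trans ?_ (le_iSup _ C)
          rw [min_eq_left hC]
        · exact iSup_le fun C => ENNReal.ofReal_le_ofReal (min_le_left _ _)
      simp_rw [hsup]
      rw [lintegral_iSup]
      · refine iSup_le fun C => ?_
        rw [← ofReal_integral_eq_lintegral_ofReal]
        · rw [← ENNReal.ofReal_one]; exact ENNReal.ofReal_le_ofReal (key C)
        · refine Integrable.of_bound (hm.min measurable_const).aestronglyMeasurable C
            (Filter.Eventually.of_forall fun ω => ?_)
          rw [Real.norm_eq_abs, abs_of_nonneg (le_min (hpos ω) (Nat.cast_nonneg C))]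
          exact min_le_right _ _
        · exact Filter.Eventually.of_forall fun ω => le_min (hpos ω) (Nat.cast_nonneg C)
      · exact fun C => (hm.min measurable_const).ennreal_ofReal
      · intro C D hCD ω
        exact ENNReal.ofReal_le_ofReal (min_le_min_left _ (Nat.cast_le.2 hCD))
    have hint : Integrable (W μ l i m (t + 1)) (P θ) := by
      refine ⟨hm.aestronglyMeasurable, ?_⟩
      rw [hasFiniteIntegral_iff_ofReal (Filter.Eventually.of_forall hpos)]
      exact lt_of_le_of_lt hlint ENNReal.one_lt_top
    refine ⟨hint, ?_⟩
    rw [integral_eq_lintegral_of_nonneg_ae (Filter.Eventually.of_forall hpos)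
      hm.aestronglyMeasurable]
    exact ENNReal.toReal_le_of_le_ofReal zero_le_one (by simpa using hlint)

/-! ### Regret in terms of counts -/

lemma sum_arm (i : Fin 2) (n : ℕ) (ω : Traj) :
    ∑ t ∈ Finset.Icc 1 n, (if armAt theAlg t ω = i then (1 : ℝ) else 0) = (st n ω).1 i := by
  induction n with
  | zero => simp [st]
  | succ n ih =>
    rw [Finset.sum_Icc_succ_top (by omega), ih]
    have : armAt theAlg (n + 1) ω = armOf (st n ω) := choose_eq n ω
    rw [this]
    simp only [st]
    push_cast
    rfl

lemma regret_zero (n : ℕ) (ω : Traj) :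
    regret muAmb theAlg 0 n ω = (st n ω).1 1 := by
  rw [← sum_arm, regret]
  refine Finset.sum_congr rfl fun t _ => ?_
  generalize armAt theAlg t ω = a
  fin_cases a <;> simp [muAmb]

lemma regret_pos (θ : ℝ) (hθ : 0 < θ) (n : ℕ) (ω : Traj) :
    regret muAmb theAlg θ n ω = θ * (st n ω).1 0 := by
  rw [← sum_arm, regret, Finset.mul_sum]
  refine Finset.sum_congr rfl fun t _ => ?_
  generalize armAt theAlg t ω = a
  fin_cases a <;> simp [muAmb, hθ, hθ.le, not_le.2 hθ]

/-! ### Pathwise bounds -/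

/-- Upper bound for the indicator that arm 2 is played with counts `2 ^ k` and `m`. -/
noncomputable def U (n k m : ℕ) (ω : Traj) : ℝ :=
  if m < 32 * (k + 1) then W 0 (-(thr k / 2 ^ k)) 0 (2 ^ k) n ω * Real.exp (-4 * Real.log (k + 1))
  else W (-1) (1 / 2) 1 m n ω * Real.exp (-(m : ℝ) / 8 + 2 * (k + 1))

lemma U_nonneg (n k m : ℕ) (ω : Traj) : 0 ≤ U n k m ω := by
  unfold U; split_ifs
  · exact mul_nonneg (W_pos _ _ _ _ _ _).le (Real.exp_nonneg _)
  · exact mul_nonneg (W_pos _ _ _ _ _ _).le (Real.exp_nonneg _)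

lemma log_nonneg' (k : ℕ) : 0 ≤ Real.log ((k : ℝ) + 1) :=
  Real.log_nonneg (by have := Nat.cast_nonneg (α := ℝ) k; linarith)

lemma thr_sq (k : ℕ) : thr k ^ 2 = 8 * 2 ^ k * Real.log (k + 1) :=
  Real.sq_sqrt (mul_nonneg (by positivity) (log_nonneg' k))

lemma thr_nonneg (k : ℕ) : 0 ≤ thr k := Real.sqrt_nonneg _

lemma armOf_one {s : St} (h : armOf s = 1) : Cond s := by
  classical
  by_contra hc
  simp [armOf, hc] at h

lemma armOf_zero {s : St} (h : armOf s = 0) : ¬ Cond s := by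
  classical
  intro hc
  simp [armOf, hc] at h

lemma U_ge (n k m t : ℕ) (ω : Traj) (ht : t ≤ n) (h0 : (st t ω).1 0 = 2 ^ k)
    (h1 : (st t ω).1 1 = m) (hS : (st t ω).2 0 ≤ -thr k)
    (hT : -(((st t ω).1 1 : ℝ) / 2) - 4 * (k + 1) ≤ (st t ω).2 1) : 1 ≤ U n k m ω := by
  unfold U
  split_ifs with hm
  · rw [W_final _ _ _ _ t n ω ht h0, ← Real.exp_add, Real.one_le_exp_iff]
    have h2 := thr_sq k
    have h3 := thr_nonneg k
    have hp : (0 : ℝ) < 2 ^ k := by positivity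
    push_cast
    have a1 : thr k / 2 ^ k * thr k ≤ -(thr k / 2 ^ k) * (st t ω).2 0 := by
      have : 0 ≤ thr k / 2 ^ k := by positivity
      nlinarith
    have a2 : thr k / 2 ^ k * thr k = 8 * Real.log (k + 1) := by
      rw [div_mul_eq_mul_div, ← sq, h2]; field_simp
    have a3 : (-(thr k / 2 ^ k)) ^ 2 * 2 ^ k / 2 = 4 * Real.log (k + 1) := by
      rw [neg_sq, div_pow, h2]; field_simp; ring
    rw [a3]; linarith
  · rw [W_final _ _ _ _ t n ω ht h1, ← Real.exp_add, Real.one_le_exp_iff]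
    rw [h1] at hT
    linarith

lemma cnt_one_le (n : ℕ) (ω : Traj) :
    ((st n ω).1 1 : ℝ) ≤ ∑ k ∈ Finset.range n, ∑ m ∈ Finset.range n, U n k m ω := by
  have h1 : ((st n ω).1 1 : ℝ) = ∑ m ∈ Finset.range ((st n ω).1 1), (1 : ℝ) := by simp
  rw [h1, Finset.sum_comm]
  refine le_trans ?_ (Finset.sum_le_sum_of_subset_of_nonneg
    (Finset.range_mono (cnt_le 1 n ω))
    fun m _ _ => Finset.sum_nonneg fun k _ => U_nonneg _ _ _ _)
  refine Finset.sum_le_sum fun m hm => ?_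
  obtain ⟨t, ht, hc, ha⟩ := exists_cnt 1 m n ω (Finset.mem_range.1 hm)
  obtain ⟨k, hk, hS, hT⟩ := armOf_one ha
  have hkn : k < n := by
    have := cnt_le 0 t ω
    have := @Nat.lt_two_pow_self k
    omega
  exact le_trans (U_ge n k m t ω ht.le hk hc hS hT)
    (Finset.single_le_sum (f := fun k => U n k m ω) (fun k _ => U_nonneg _ _ _ _)
      (Finset.mem_range.2 hkn))

lemma nat_dyadic (K N : ℕ) (h : N ≤ 2 ^ K) :
    (N : ℝ) ≤ 1 + ∑ k ∈ Finset.range K, (if 2 ^ k < N then (2 : ℝ) ^ k else 0) := by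
  induction K with
  | zero => simpa using h
  | succ K ih =>
    rw [Finset.sum_range_succ]
    by_cases hN : N ≤ 2 ^ K
    · have := ih hN
      rw [if_neg (by omega), add_zero]; exact this
    · push Not at hN
      rw [if_pos hN, Finset.sum_congr rfl (g := fun k => (2 : ℝ) ^ k)]
      · rw [geom_sum_eq (by norm_num)]
        have : (N : ℝ) ≤ 2 ^ (K + 1) := by exact_mod_cast h
        rw [pow_succ] at this
        linarith
      · intro k hk
        rw [if_pos]
        refine lt_of_le_of_lt (Nat.pow_le_pow_right (by norm_num) ?_) hN
        exact (Finset.mem_range.1 hk).le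

/-- Upper bound for the contribution of stage `k` to the number of plays of arm 1. -/
noncomputable def V (θ : ℝ) (n k : ℕ) (ω : Traj) : ℝ :=
  (if θ ^ 2 * 2 ^ k ≤ 96 * (1 + Real.log (Real.log n)) then 1
    else W (-θ) (θ / 2) 0 (2 ^ k) n ω * Real.exp (-(θ ^ 2 * 2 ^ k) / 8)) +
  ∑ m ∈ Finset.range n, W 0 (-(1 / 2)) 1 m n ω * Real.exp (-(m : ℝ) / 8 - 2 * (k + 1))

lemma V_nonneg (θ : ℝ) (n k : ℕ) (ω : Traj) : 0 ≤ V θ n k ω := by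
  unfold V
  refine add_nonneg ?_ (Finset.sum_nonneg fun m _ =>
    mul_nonneg (W_pos _ _ _ _ _ _).le (Real.exp_nonneg _))
  split_ifs
  · exact zero_le_one
  · exact mul_nonneg (W_pos _ _ _ _ _ _).le (Real.exp_nonneg _)

/-- Elementary bound on `log (k + 1)` for `2 ^ k < n`. -/
lemma log_bound (n k : ℕ) (hn : 16 ≤ n) (h : 2 ^ k < n) :
    Real.log (k + 1) ≤ 3 * (1 + Real.log (Real.log n)) ∧ 1 ≤ Real.log (Real.log n) := by
  have hn' : (16 : ℝ) ≤ n := by exact_mod_cast hn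
  have l2 : 0.6931471803 < Real.log 2 := Real.log_two_gt_d9
  have l16 : Real.log 16 = 4 * Real.log 2 := by
    rw [show (16 : ℝ) = 2 ^ 4 by norm_num, Real.log_pow]; norm_num
  have hl : 2.77 ≤ Real.log n := by
    have := Real.log_le_log (by norm_num) hn'
    linarith
  have h1 : 1 ≤ Real.log (Real.log n) := by
    rw [Real.le_log_iff_exp_le (by linarith)]
    have := Real.exp_one_lt_d9
    linarith
  refine ⟨?_, h1⟩
  have hk : (k : ℝ) * Real.log 2 ≤ Real.log n := by
    rw [← Real.log_pow]
    exact Real.log_le_log (by positivity) (by exact_mod_cast h.le)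
  have hk2 : (k : ℝ) + 1 ≤ 3 * Real.log n := by
    have : (0 : ℝ) ≤ k := Nat.cast_nonneg k
    nlinarith
  have h3 : Real.log (k + 1) ≤ Real.log 3 + Real.log (Real.log n) := by
    rw [← Real.log_mul (by norm_num) (by linarith)]
    exact Real.log_le_log (by positivity) hk2
  have h4 : Real.log 3 ≤ 3 - 1 := Real.log_le_sub_one_of_pos (by norm_num)
  linarith

lemma V_ge (θ : ℝ) (hθ : 0 < θ) (n k : ℕ) (hn : 16 ≤ n) (ω : Traj) (h : 2 ^ k < (st n ω).1 0) :
    1 ≤ V θ n k ω := by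
  obtain ⟨t, ht, hc, ha⟩ := exists_cnt 0 (2 ^ k) n ω h
  have hnc := armOf_zero ha
  have hkn : 2 ^ k < n := lt_of_lt_of_le h (cnt_le 0 n ω)
  have hlb := (log_bound n k hn hkn).1
  have hsum : 0 ≤ ∑ m ∈ Finset.range n,
      W 0 (-(1 / 2)) 1 m n ω * Real.exp (-(m : ℝ) / 8 - 2 * (k + 1)) :=
    Finset.sum_nonneg fun m _ => mul_nonneg (W_pos _ _ _ _ _ _).le (Real.exp_nonneg _)
  unfold V
  by_cases hS : (st t ω).2 0 ≤ -thr k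
  · have hT : (st t ω).2 1 < -(((st t ω).1 1 : ℝ) / 2) - 4 * (k + 1) := by
      by_contra hT
      exact hnc ⟨k, hc, hS, not_lt.1 hT⟩
    have hmn : (st t ω).1 1 < n := lt_of_le_of_lt (cnt_le 1 t ω) ht
    have h1 : 1 ≤ W 0 (-(1 / 2)) 1 ((st t ω).1 1) n ω *
        Real.exp (-(((st t ω).1 1 : ℕ) : ℝ) / 8 - 2 * (k + 1)) := by
      rw [W_final _ _ _ _ t n ω ht.le rfl, ← Real.exp_add, Real.one_le_exp_iff]
      linarith
    have h2 := Finset.single_le_sum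
      (f := fun m : ℕ => W 0 (-(1 / 2)) 1 m n ω * Real.exp (-(m : ℝ) / 8 - 2 * (k + 1)))
      (fun m _ => mul_nonneg (W_pos _ _ _ _ _ _).le (Real.exp_nonneg _))
      (Finset.mem_range.2 hmn)
    have h3 : 0 ≤ (if θ ^ 2 * 2 ^ k ≤ 96 * (1 + Real.log (Real.log n)) then 1
      else W (-θ) (θ / 2) 0 (2 ^ k) n ω * Real.exp (-(θ ^ 2 * 2 ^ k) / 8)) := by
      split_ifs
      · exact zero_le_one
      · exact mul_nonneg (W_pos _ _ _ _ _ _).le (Real.exp_nonneg _)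
    linarith
  · push Not at hS
    split_ifs with hsm
    · linarith
    · push Not at hsm
      have h4 : 2 * thr k ≤ θ * 2 ^ k := by
        refine (sq_le_sq₀ (mul_nonneg zero_le_two (thr_nonneg k)) (by positivity)).1 ?_
        rw [mul_pow, thr_sq, mul_pow]
        have : (0 : ℝ) < 2 ^ k := by positivity
        nlinarith
      have : 1 ≤ W (-θ) (θ / 2) 0 (2 ^ k) n ω * Real.exp (-(θ ^ 2 * 2 ^ k) / 8) := by
        rw [W_final _ _ _ _ t n ω ht.le hc, ← Real.exp_add, Real.one_le_exp_iff]
        push_cast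
        nlinarith
      linarith

lemma cnt_zero_le (θ : ℝ) (hθ : 0 < θ) (n : ℕ) (hn : 16 ≤ n) (ω : Traj) :
    ((st n ω).1 0 : ℝ) ≤ 1 + ∑ k ∈ Finset.range n, 2 ^ k * V θ n k ω := by
  have h := nat_dyadic n ((st n ω).1 0) ((cnt_le 0 n ω).trans Nat.lt_two_pow_self.le)
  refine h.trans ?_
  gcongr with k hk
  split_ifs with h2
  · have := V_ge θ hθ n k hn ω h2
    have : (0 : ℝ) < 2 ^ k := by positivity
    nlinarith
  · exact mul_nonneg (by positivity) (V_nonneg _ _ _ _)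

/-! ### Deterministic sums -/

lemma sum_small (r M : ℝ) (hr : 0 < r) (hM : 0 ≤ M) (K : ℕ) :
    ∑ k ∈ Finset.range K, (if r * 2 ^ k ≤ M then r * 2 ^ k else 0) ≤ 2 * M := by
  induction K with
  | zero => simpa using hM
  | succ K ih =>
    rw [Finset.sum_range_succ]
    split_ifs with h
    · have : ∑ k ∈ Finset.range K, (if r * 2 ^ k ≤ M then r * 2 ^ k else 0)
          ≤ ∑ k ∈ Finset.range K, r * 2 ^ k := by
        refine Finset.sum_le_sum fun k _ => ?_
        split_ifs
        · exact le_rfl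
        · positivity
      rw [← Finset.mul_sum, geom_sum_eq (by norm_num)] at this
      nlinarith
    · linarith

lemma sum_exp (r : ℝ) (hr : 0 < r) (K : ℕ) :
    ∑ k ∈ Finset.range K, r * 2 ^ k * Real.exp (-(r * 2 ^ k) / 8) ≤ 16 := by
  have key : ∀ K : ℕ, ∑ k ∈ Finset.range K, r * 2 ^ k * Real.exp (-(r * 2 ^ k) / 8)
      ≤ 16 - 16 * Real.exp (-(r * 2 ^ K) / 16) := by
    intro K
    induction K with
    | zero =>
      have : Real.exp (-(r * 2 ^ 0) / 16) ≤ 1 := Real.exp_le_one_iff.2 (by simp; linarith)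
      simp only [Finset.range_zero, Finset.sum_empty]; linarith
    | succ K ih =>
      rw [Finset.sum_range_succ]
      set x := r * 2 ^ K with hx
      have hx2 : r * 2 ^ (K + 1) = 2 * x := by rw [hx, pow_succ]; ring
      rw [hx2]
      set u := Real.exp (-x / 16) with hu
      have hu0 : 0 < u := Real.exp_pos _
      have e1 : Real.exp (-x / 8) = u * u := by rw [hu, ← Real.exp_add]; congr 1; ring
      have e2 : Real.exp (-(2 * x) / 16) = u * u := by rw [hu, ← Real.exp_add]; congr 1; ring
      have e3 : u * Real.exp (x / 16) = 1 := by
        rw [hu, ← Real.exp_add, ← Real.exp_zero]; congr 1; ring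
      have e4 : x / 16 + 1 ≤ Real.exp (x / 16) := Real.add_one_le_exp _
      rw [e1, e2]
      have e5 : u * (x / 16 + 1) ≤ 1 := by nlinarith
      nlinarith
  have := key K
  have := Real.exp_pos (-(r * 2 ^ K) / 16)
  linarith

lemma sum_geo (c : ℝ) (hc : 0 < c) : ∃ A : ℝ, 0 ≤ A ∧ ∀ n : ℕ,
    ∑ m ∈ Finset.range n, Real.exp (-(m : ℝ) * c) ≤ A := by
  have hs : Summable fun m : ℕ => Real.exp (-(m : ℝ) * c) := by
    have : (fun m : ℕ => Real.exp (-(m : ℝ) * c)) = fun m : ℕ => Real.exp (-c) ^ m := by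
      funext m; rw [← Real.exp_nat_mul]; congr 1; ring
    rw [this]
    exact summable_geometric_of_lt_one (Real.exp_nonneg _) (by rw [← Real.exp_zero]; exact Real.exp_lt_exp.2 (by linarith))
  exact ⟨_, tsum_nonneg fun _ => Real.exp_nonneg _,
    fun n => hs.sum_le_tsum _ fun _ _ => Real.exp_nonneg _⟩

/-- Bound for the expectation of `U`. -/
noncomputable def u (k m : ℕ) : ℝ :=
  if m < 32 * (k + 1) then Real.exp (-4 * Real.log (k + 1))
  else Real.exp (-(m : ℝ) / 8 + 2 * (k + 1))

lemma u_sum : ∃ A : ℝ, 0 ≤ A ∧ ∀ n : ℕ,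
    ∑ k ∈ Finset.range n, ∑ m ∈ Finset.range n, u k m ≤ A := by
  obtain ⟨A, hA, hAn⟩ := sum_geo (1 / 32) (by norm_num)
  obtain ⟨B, hB, hBn⟩ := sum_geo 1 (by norm_num)
  have hs : Summable fun k : ℕ => 1 / ((k : ℝ) + 1) ^ 3 := by
    have := (summable_nat_add_iff 1).2 (Real.summable_one_div_nat_pow.2 (by norm_num : 1 < 3))
    simpa using this
  refine ⟨32 * (∑' k : ℕ, 1 / ((k : ℝ) + 1) ^ 3) + B * A,
    add_nonneg (mul_nonneg (by norm_num) (tsum_nonneg fun _ => by positivity))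
      (mul_nonneg hB hA), fun n => ?_⟩
  have hk : ∀ k ∈ Finset.range n, ∑ m ∈ Finset.range n, u k m
      ≤ 32 * (1 / ((k : ℝ) + 1) ^ 3) + Real.exp (-(k : ℝ) * 1) * A := by
    intro k _
    have hkp : (0 : ℝ) < (k : ℝ) + 1 := by positivity
    have e : Real.exp (-4 * Real.log (k + 1)) = 1 / ((k : ℝ) + 1) ^ 4 := by
      rw [show -4 * Real.log ((k : ℝ) + 1) = -(Real.log (((k : ℝ) + 1) ^ 4)) by
        rw [Real.log_pow]; push_cast; ring, Real.exp_neg, Real.exp_log (by positivity), one_div]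
    have hm : ∀ m ∈ Finset.range n, u k m ≤
        (if m < 32 * (k + 1) then 1 / ((k : ℝ) + 1) ^ 4 else 0) +
          Real.exp (-(k : ℝ) * 1) * Real.exp (-(m : ℝ) * (1 / 32)) := by
      intro m _
      unfold u
      split_ifs with h
      · rw [e]
        have : 0 < Real.exp (-(k : ℝ) * 1) * Real.exp (-(m : ℝ) * (1 / 32)) := by positivity
        linarith
      · rw [zero_add, ← Real.exp_add]
        apply Real.exp_le_exp.2
        push Not at h
        have : (32 : ℝ) * (k + 1) ≤ m := by exact_mod_cast h
        linarith
    refine (Finset.sum_le_sum hm).trans ?_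
    rw [Finset.sum_add_distrib, ← Finset.mul_sum]
    refine add_le_add ?_ (mul_le_mul_of_nonneg_left (hAn n) (Real.exp_nonneg _))
    rw [← Finset.sum_filter, Finset.sum_const, nsmul_eq_mul]
    have hcard : ((Finset.range n).filter (fun m => m < 32 * (k + 1))).card ≤ 32 * (k + 1) := by
      refine (Finset.card_le_card (t := Finset.range (32 * (k + 1))) fun m hm => ?_).trans
        (by simp)
      exact Finset.mem_range.2 (Finset.mem_filter.1 hm).2
    have hcard' : (((Finset.range n).filter (fun m => m < 32 * (k + 1))).card : ℝ)
        ≤ 32 * ((k : ℝ) + 1) := by exact_mod_cast hcard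
    calc _ ≤ 32 * ((k : ℝ) + 1) * (1 / ((k : ℝ) + 1) ^ 4) :=
          mul_le_mul_of_nonneg_right hcard' (by positivity)
      _ = _ := by field_simp
  refine (Finset.sum_le_sum hk).trans ?_
  rw [Finset.sum_add_distrib, ← Finset.mul_sum, ← Finset.sum_mul]
  refine add_le_add (mul_le_mul_of_nonneg_left ?_ (by norm_num))
    (mul_le_mul_of_nonneg_right (hBn n) hA)
  exact hs.sum_le_tsum _ fun _ _ => by positivity

lemma U_integral (P : ℝ → Measure Traj) (hP : IsEnv muAmb theAlg P) (n k m : ℕ) :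
    Integrable (U n k m) (P 0) ∧ ∫ ω, U n k m ω ∂(P 0) ≤ u k m := by
  have m0 : muAmb 0 0 = 0 := by simp [muAmb]
  have m1 : muAmb 1 0 = -1 := by simp [muAmb]
  unfold U u
  split_ifs with h
  · obtain ⟨a, b⟩ := W_integral P hP 0 (-(thr k / 2 ^ k)) 0 (2 ^ k) n
    rw [m0] at a b
    refine ⟨a.mul_const _, ?_⟩
    rw [integral_mul_const]
    exact mul_le_of_le_one_left (Real.exp_nonneg _) b
  · obtain ⟨a, b⟩ := W_integral P hP 0 (1 / 2) 1 m n
    rw [m1] at a b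
    refine ⟨a.mul_const _, ?_⟩
    rw [integral_mul_const]
    exact mul_le_of_le_one_left (Real.exp_nonneg _) b

lemma V_integral (P : ℝ → Measure Traj) (hP : IsEnv muAmb theAlg P) (θ : ℝ) (hθ : 0 < θ)
    (n k : ℕ) :
    Integrable (V θ n k) (P θ) ∧ ∫ ω, V θ n k ω ∂(P θ) ≤
      (if θ ^ 2 * 2 ^ k ≤ 96 * (1 + Real.log (Real.log n)) then 1 else 0) +
      Real.exp (-(θ ^ 2 * 2 ^ k) / 8) +
      ∑ m ∈ Finset.range n, Real.exp (-(m : ℝ) / 8 - 2 * (k + 1)) := by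
  have := hP.1 θ
  have m0 : muAmb 0 θ = -θ := by simp [muAmb, hθ]
  have m1 : muAmb 1 θ = 0 := by simp [muAmb, not_le.2 hθ]
  have hs : ∀ m : ℕ, Integrable
      (fun ω => W 0 (-(1 / 2)) 1 m n ω * Real.exp (-(m : ℝ) / 8 - 2 * (k + 1))) (P θ) ∧
      ∫ ω, W 0 (-(1 / 2)) 1 m n ω * Real.exp (-(m : ℝ) / 8 - 2 * (k + 1)) ∂(P θ) ≤
        Real.exp (-(m : ℝ) / 8 - 2 * (k + 1)) := by
    intro m
    obtain ⟨a, b⟩ := W_integral P hP θ (-(1 / 2)) 1 m n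
    rw [m1] at a b
    refine ⟨a.mul_const _, ?_⟩
    rw [integral_mul_const]
    exact mul_le_of_le_one_left (Real.exp_nonneg _) b
  have hf : Integrable (fun ω => if θ ^ 2 * 2 ^ k ≤ 96 * (1 + Real.log (Real.log n)) then 1
      else W (-θ) (θ / 2) 0 (2 ^ k) n ω * Real.exp (-(θ ^ 2 * 2 ^ k) / 8)) (P θ) ∧
      ∫ ω, (if θ ^ 2 * 2 ^ k ≤ 96 * (1 + Real.log (Real.log n)) then 1
      else W (-θ) (θ / 2) 0 (2 ^ k) n ω * Real.exp (-(θ ^ 2 * 2 ^ k) / 8)) ∂(P θ) ≤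
      (if θ ^ 2 * 2 ^ k ≤ 96 * (1 + Real.log (Real.log n)) then 1 else 0) +
      Real.exp (-(θ ^ 2 * 2 ^ k) / 8) := by
    split_ifs with h
    · refine ⟨integrable_const _, ?_⟩
      simp [Real.exp_nonneg]
    · obtain ⟨a, b⟩ := W_integral P hP θ (θ / 2) 0 (2 ^ k) n
      rw [m0] at a b
      refine ⟨a.mul_const _, ?_⟩
      rw [integral_mul_const, zero_add]
      exact mul_le_of_le_one_left (Real.exp_nonneg _) b
  have hsi := integrable_finsetSum (μ := P θ) (Finset.range n) fun m _ => (hs m).1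
  refine ⟨hf.1.add hsi, ?_⟩
  unfold V
  rw [integral_add hf.1 hsi, integral_finsetSum _ fun m _ => (hs m).1]
  exact add_le_add hf.2 (Finset.sum_le_sum fun m _ => (hs m).2)

/-- **Remark after Theorem 8.** For the two-armed structured bandit with `Θ = [−1,1]`,
`μ₁(θ) = −θ·1{θ > 0}`, `μ₂(θ) = −1{θ ≤ 0}` and unit-variance normal rewards, there is an
algorithm such that `max{E₀ R_n(0), sup_{θ > 0} θ·E_θ R_n(θ)} ∈ O(log log n)` (so in
particular this quantity is not `Ω(log n)`). -/
theorem loglog_worst_case_ambiguous_example :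
    ∃ alg : Alg, ∀ P : ℝ → Measure Traj, IsEnv muAmb alg P →
      ∃ C > (0 : ℝ), ∃ N : ℕ, ∀ n : ℕ, N ≤ n →
        expRegret muAmb alg P 0 n ≤ C * Real.log (Real.log n) ∧
        ∀ θ : ℝ, 0 < θ → θ ≤ 1 →
          θ * expRegret muAmb alg P θ n ≤ C * Real.log (Real.log n) := by
  obtain ⟨A, hA, hAn⟩ := u_sum
  obtain ⟨B, hB, hBn⟩ := sum_geo (1 / 8) (by norm_num)
  obtain ⟨D, hD, hDn⟩ := sum_geo 1 (by norm_num)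
  refine ⟨theAlg, fun P hP => ⟨A + 1000 + D * B, by positivity, 16, fun n hn => ?_⟩⟩
  obtain ⟨-, hll⟩ := log_bound n 0 hn (by omega)
  set LL := Real.log (Real.log n) with hLL
  constructor
  · have := hP.1 0
    have h1 : expRegret muAmb theAlg P 0 n ≤ A := by
      unfold expRegret
      calc _ ≤ ∫ ω, ∑ k ∈ Finset.range n, ∑ m ∈ Finset.range n, U n k m ω ∂(P 0) := by
            refine integral_mono_of_nonneg (Filter.Eventually.of_forall fun ω => ?_) ?_
              (Filter.Eventually.of_forall fun ω => ?_)
            · simp only [regret_zero]; exact Nat.cast_nonneg _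
            · exact integrable_finsetSum _ fun k _ => integrable_finsetSum _ fun m _ =>
                (U_integral P hP n k m).1
            · simp only [regret_zero]; exact cnt_one_le n ω
        _ = ∑ k ∈ Finset.range n, ∑ m ∈ Finset.range n, ∫ ω, U n k m ω ∂(P 0) := by
            rw [integral_finsetSum _ fun k _ => integrable_finsetSum _ fun m _ =>
              (U_integral P hP n k m).1]
            refine Finset.sum_congr rfl fun k _ => ?_
            rw [integral_finsetSum _ fun m _ => (U_integral P hP n k m).1]
        _ ≤ ∑ k ∈ Finset.range n, ∑ m ∈ Finset.range n, u k m :=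
            Finset.sum_le_sum fun k _ => Finset.sum_le_sum fun m _ => (U_integral P hP n k m).2
        _ ≤ A := hAn n
    have : 0 ≤ D * B := by positivity
    nlinarith
  · intro θ hθ hθ1
    have := hP.1 θ
    set r := θ ^ 2 with hr
    have hr0 : 0 < r := by positivity
    have hr1 : r ≤ 1 := by rw [hr]; nlinarith
    have hint : Integrable (fun ω => θ * (1 + ∑ k ∈ Finset.range n, 2 ^ k * V θ n k ω)) (P θ) :=
      ((integrable_const _).add (integrable_finsetSum _ fun k _ =>
        (V_integral P hP θ hθ n k).1.const_mul _)).const_mul _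
    have h1 : expRegret muAmb theAlg P θ n ≤
        θ * (1 + ∑ k ∈ Finset.range n, 2 ^ k * ∫ ω, V θ n k ω ∂(P θ)) := by
      unfold expRegret
      calc _ ≤ ∫ ω, θ * (1 + ∑ k ∈ Finset.range n, 2 ^ k * V θ n k ω) ∂(P θ) := by
            refine integral_mono_of_nonneg (Filter.Eventually.of_forall fun ω => ?_) hint
              (Filter.Eventually.of_forall fun ω => ?_)
            · simp only [regret_pos θ hθ]; exact mul_nonneg hθ.le (Nat.cast_nonneg _)
            · simp only [regret_pos θ hθ]
              exact mul_le_mul_of_nonneg_left (cnt_zero_le θ hθ n hn ω) hθ.le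
        _ = _ := by
            rw [integral_const_mul, integral_add (integrable_const _)
              (integrable_finsetSum _ fun k _ => (V_integral P hP θ hθ n k).1.const_mul _),
              integral_finsetSum _ fun k _ => (V_integral P hP θ hθ n k).1.const_mul _]
            simp only [integral_const_mul]
            simp
    have h2 : ∀ k ∈ Finset.range n, r * (2 ^ k * ∫ ω, V θ n k ω ∂(P θ)) ≤
        (if r * 2 ^ k ≤ 96 * (1 + LL) then r * 2 ^ k else 0) +
        r * 2 ^ k * Real.exp (-(r * 2 ^ k) / 8) + Real.exp (-(k : ℝ) * 1) * B := by
      intro k _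
      have hv := (V_integral P hP θ hθ n k).2
      have hx : 0 < r * 2 ^ k := by positivity
      have hg : r * 2 ^ k * ∑ m ∈ Finset.range n, Real.exp (-(m : ℝ) / 8 - 2 * (k + 1)) ≤
          Real.exp (-(k : ℝ) * 1) * B := by
        have e1 : ∑ m ∈ Finset.range n, Real.exp (-(m : ℝ) / 8 - 2 * (k + 1)) =
            Real.exp (-2 * ((k : ℝ) + 1)) * ∑ m ∈ Finset.range n, Real.exp (-(m : ℝ) * (1 / 8)) := by
          rw [Finset.mul_sum]
          refine Finset.sum_congr rfl fun m _ => ?_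
          rw [← Real.exp_add]; congr 1; ring
        have e2 : (2 : ℝ) ^ k ≤ Real.exp k := by
          have : (2 : ℝ) ≤ Real.exp 1 := by have := Real.add_one_le_exp 1; linarith
          calc (2 : ℝ) ^ k ≤ Real.exp 1 ^ k := by gcongr
            _ = Real.exp k := by rw [← Real.exp_nat_mul]; simp
        have e3 : r * 2 ^ k ≤ Real.exp k := by
          have : (0 : ℝ) < 2 ^ k := by positivity
          nlinarith
        rw [e1]
        have e4 : Real.exp k * Real.exp (-2 * ((k : ℝ) + 1)) ≤ Real.exp (-(k : ℝ) * 1) := by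
          rw [← Real.exp_add]; apply Real.exp_le_exp.2; linarith
        calc _ = (r * 2 ^ k * Real.exp (-2 * ((k : ℝ) + 1))) *
              ∑ m ∈ Finset.range n, Real.exp (-(m : ℝ) * (1 / 8)) := by ring
          _ ≤ Real.exp (-(k : ℝ) * 1) * B := by
            refine mul_le_mul ?_ (hBn n) (Finset.sum_nonneg fun _ _ => Real.exp_nonneg _)
              (Real.exp_nonneg _)
            exact le_trans (mul_le_mul_of_nonneg_right e3 (Real.exp_nonneg _)) e4
      have hv' := mul_le_mul_of_nonneg_left hv hx.le
      rw [mul_add, mul_add, mul_ite, mul_one, mul_zero] at hv'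
      calc _ = r * 2 ^ k * ∫ ω, V θ n k ω ∂(P θ) := by ring
        _ ≤ _ := hv'.trans (by gcongr)
    have h3 := Finset.sum_le_sum h2
    rw [← Finset.mul_sum, Finset.sum_add_distrib, Finset.sum_add_distrib, ← Finset.sum_mul] at h3
    have h4 := sum_small r (96 * (1 + LL)) hr0 (by linarith) n
    have h5 := sum_exp r hr0 n
    have h6 := mul_le_mul_of_nonneg_right (hDn n) hB
    have h7 : θ * expRegret muAmb theAlg P θ n ≤
        r + r * ∑ k ∈ Finset.range n, 2 ^ k * ∫ ω, V θ n k ω ∂(P θ) := by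
      calc _ ≤ θ * (θ * (1 + ∑ k ∈ Finset.range n, 2 ^ k * ∫ ω, V θ n k ω ∂(P θ))) :=
            mul_le_mul_of_nonneg_left h1 hθ.le
        _ = _ := by rw [hr]; ring
    have h8 : 0 ≤ D * B := by positivity
    have h9 : θ * expRegret muAmb theAlg P θ n ≤ 1 + 2 * (96 * (1 + LL)) + 16 + D * B := by
      linarith
    nlinarith

end TwoArmedBandit
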